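/- arXiv:1706.00451 — 3 statements merged into one kernel-verified Lean document; each statement's English description precedes it below -/
import Mathlib

section
/- Let ρ be a binary constant-length substitution of length L ≥ 2 with Fourier matrix B(k), and suppose the polynomials Q and R are not equal (equivalently, det B(k) does not vanish identically). Then for Lebesgue-almost every k ∈ ℝ the limit lim_{n→∞} (1/n)·log‖B(k)·B(Lk)···B(L^{n−1}k)‖ exists and equals m(Q−R), the logarithmic Mahler measure of Q−R; equivalently, the minimal Lyapunov exponent of the outward cocycle is χ_min(k) = log√L − m(Q−R) for almost every k. -/
open Filter Polynomial

noncomputable section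

/-- `e k = exp(2πik)`, the point on the unit circle with angle `2πk`. -/
def e (k : ℝ) : ℂ := Complex.exp (2 * Real.pi * Complex.I * k)

/-- Coincidence positions of type `a` (letter `a` encoded as `0`, `b` as `1`). -/
def Ca {L : ℕ} (wa wb : Fin L → Fin 2) : Finset (Fin L) :=
  Finset.univ.filter fun i => wa i = 0 ∧ wb i = 0

/-- Coincidence positions of type `b`. -/
def Cb {L : ℕ} (wa wb : Fin L → Fin 2) : Finset (Fin L) :=
  Finset.univ.filter fun i => wa i = 1 ∧ wb i = 1

/-- Bijective positions where `(w_a)_i = a` and `(w_b)_i = b`. -/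
def Pa {L : ℕ} (wa wb : Fin L → Fin 2) : Finset (Fin L) :=
  Finset.univ.filter fun i => wa i = 0 ∧ wb i = 1

/-- Bijective positions where `(w_a)_i = b` and `(w_b)_i = a`. -/
def Pb {L : ℕ} (wa wb : Fin L → Fin 2) : Finset (Fin L) :=
  Finset.univ.filter fun i => wa i = 1 ∧ wb i = 0

/-- The polynomial `∑_{z ∈ S} X^z` associated with a set of positions. -/
def posPoly {L : ℕ} (S : Finset (Fin L)) : Polynomial ℂ :=
  ∑ z ∈ S, Polynomial.X ^ (z : ℕ)

/-- The Fourier matrix `B(k)` of the substitution determined by `wa, wb`. -/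
def FourierB {L : ℕ} (wa wb : Fin L → Fin 2) (k : ℝ) : Matrix (Fin 2) (Fin 2) ℂ :=
  !![(posPoly (Ca wa wb) + posPoly (Pa wa wb)).eval (e k),
     (posPoly (Ca wa wb) + posPoly (Pb wa wb)).eval (e k);
     (posPoly (Cb wa wb) + posPoly (Pb wa wb)).eval (e k),
     (posPoly (Cb wa wb) + posPoly (Pa wa wb)).eval (e k)]

/-- The logarithmic Mahler measure `m(f) = ∫₀¹ log |f(e^{2πik})| dk`. -/
def logMahler (f : Polynomial ℂ) : ℝ :=
  ∫ k in (0:ℝ)..1, Real.log ‖f.eval (e k)‖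

/-- The operator norm of a matrix, induced by the Euclidean norm on `ℂ²`. -/
def opNorm (M : Matrix (Fin 2) (Fin 2) ℂ) : ℝ :=
  ‖Matrix.toEuclideanCLM (𝕜 := ℂ) M‖

/-- The (forward) matrix product `B(k) · B(Lk) ⋯ B(L^{n-1}k)` of the outward cocycle. -/
def cocycleProd {L : ℕ} (wa wb : Fin L → Fin 2) (k : ℝ) (n : ℕ) :
    Matrix (Fin 2) (Fin 2) ℂ :=
  (((List.range n).map fun m => FourierB wa wb ((L : ℝ) ^ m * k))).prod

/-!
Every `B(k)` has the column eigenvector `(1, -1)`, with eigenvalue `(Q - R)(e k)`, and the row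
eigenvector `(1, 1)`, with eigenvalue `1 + u + ⋯ + u^(L-1) = t(Lk) / t(k)`, where `u = e k` and
`t(k) = e k - 1`. The matrices are thus simultaneously triangular, and in their products the second
eigenvalue telescopes to `t(Lⁿk) / t(k)`. Birkhoff's ergodic theorem for multiplication by `L` on
the circle shows that this quotient grows subexponentially, whereas the product of the eigenvalues
`(Q - R)(e (Lʲk))` grows at the exponential rate `m(Q - R)`. The latter bounds the norm from below.
The remaining entry of the product is a sum of terms of rate at most `m(Q - R)`, and this rate is
nonnegative because `Q - R` has integer coefficients; hence the same bound holds from above.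

For Birkhoff's theorem let `M n` be the maximum of the first Birkhoff sums of `f`, the empty one
included. Then `M (n + 1) - M n ∘ T` has nonnegative integral, is dominated by `|f|`, and converges
to `f` wherever the Birkhoff sums are unbounded above. By ergodicity, `∫ f < 0` therefore forces
them to be bounded above almost everywhere; apply this to `f - c` for all `c > ∫ f`, and to `-f`.
-/

open Asymptotics MeasureTheory Topology

section Growth

/-- The sequence `a` has exponential growth rate at most `m`, that is
`limsup (1 / n) log ‖a n‖ ≤ m`; phrased with `=O` so that no logarithm of zero occurs. -/
def ExpGrowthLE {E : Type*} [Norm E] (a : ℕ → E) (m : ℝ) : Prop :=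
  ∀ c, m < c → a =O[atTop] fun n : ℕ => Real.exp (c * n)

namespace ExpGrowthLE

lemma mono {E : Type*} [Norm E] {a : ℕ → E} {m m' : ℝ} (ha : ExpGrowthLE a m) (h : m ≤ m') :
    ExpGrowthLE a m' :=
  fun c hc => ha c (h.trans_lt hc)

lemma add {E : Type*} [SeminormedAddCommGroup E] {a b : ℕ → E} {m : ℝ} (ha : ExpGrowthLE a m)
    (hb : ExpGrowthLE b m) : ExpGrowthLE (fun n => a n + b n) m :=
  fun c hc => (ha c hc).add (hb c hc)

lemma mul {R : Type*} [SeminormedRing R] {a b : ℕ → R} {m m' : ℝ} (ha : ExpGrowthLE a m)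
    (hb : ExpGrowthLE b m') : ExpGrowthLE (fun n => a n * b n) (m + m') := by
  intro c hc
  have h := (ha (m + (c - (m + m')) / 2) (by linarith)).mul
    (hb (m' + (c - (m + m')) / 2) (by linarith))
  refine h.congr_right fun n => ?_
  rw [← Real.exp_add]
  ring_nf

lemma smul_const {𝕜 E : Type*} [NormedField 𝕜] [SeminormedAddCommGroup E] [NormedSpace 𝕜 E]
    {a : ℕ → 𝕜} {m : ℝ} (ha : ExpGrowthLE a m) (v : E) : ExpGrowthLE (fun n => a n • v) m := by
  intro c hc
  have hv : (fun _ : ℕ => v) =O[atTop] fun _ => (1 : ℝ) := isBigO_const_const v one_ne_zero atTop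
  simpa using (ha c hc).smul hv

lemma comp_add_one {E : Type*} [Norm E] {a : ℕ → E} {m : ℝ} (ha : ExpGrowthLE a m) :
    ExpGrowthLE (fun n => a (n + 1)) m := by
  intro c hc
  refine ((ha c hc).comp_tendsto (tendsto_add_atTop_nat 1)).trans ?_
  refine (isBigO_const_mul_self (Real.exp c) (fun n : ℕ => Real.exp (c * n)) atTop).congr_left ?_
  intro n
  rw [← Real.exp_add, Function.comp_apply]
  push_cast
  ring_nf

lemma sum_range {E : Type*} [SeminormedAddCommGroup E] {a : ℕ → E} {m : ℝ}
    (ha : ExpGrowthLE a m) (hm : 0 ≤ m) : ExpGrowthLE (fun n => ∑ j ∈ Finset.range n, a j) m := by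
  intro c hc
  obtain ⟨C, hC, hbound⟩ := bound_of_isBigO_nat_atTop (ha c hc)
  have hc1 : 0 < Real.exp c - 1 := sub_pos.2 (Real.one_lt_exp_iff.2 (hm.trans_lt hc))
  refine IsBigO.of_bound (C / (Real.exp c - 1)) (Eventually.of_forall fun n => ?_)
  calc ‖∑ j ∈ Finset.range n, a j‖
      ≤ ∑ j ∈ Finset.range n, C * Real.exp c ^ j := norm_sum_le_of_le _ fun j _ => by
        simpa [← Real.exp_nat_mul, mul_comm] using hbound (Real.exp_ne_zero (c * j))
    _ = C / (Real.exp c - 1) * (Real.exp (c * n) - 1) := by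
        rw [← Finset.mul_sum, geom_sum_eq (by linarith), mul_comm c, Real.exp_nat_mul]
        ring
    _ ≤ C / (Real.exp c - 1) * ‖Real.exp (c * n)‖ := by
        rw [Real.norm_of_nonneg (Real.exp_nonneg _)]
        gcongr
        linarith

end ExpGrowthLE

lemma expGrowthLE_zero_of_norm_le {E : Type*} [Norm E] {a : ℕ → E} {C : ℝ} (h : ∀ n, ‖a n‖ ≤ C) :
    ExpGrowthLE a 0 := by
  intro c hc
  refine IsBigO.of_bound |C| (Eventually.of_forall fun n => ((h n).trans (le_abs_self C)).trans ?_)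
  rw [Real.norm_of_nonneg (Real.exp_nonneg _)]
  exact le_mul_of_one_le_right (abs_nonneg C) (Real.one_le_exp (by positivity))

lemma expGrowthLE_of_tendsto_log_norm_div {E : Type*} [SeminormedAddCommGroup E] {a : ℕ → E}
    {m : ℝ} (h : Tendsto (fun n : ℕ => Real.log ‖a n‖ / n) atTop (𝓝 m)) : ExpGrowthLE a m := by
  intro c hc
  refine IsBigO.of_bound' ?_
  filter_upwards [h.eventually_lt_const hc, eventually_gt_atTop 0] with n hn hpos
  rw [div_lt_iff₀ (by exact_mod_cast hpos)] at hn
  rw [Real.norm_of_nonneg (Real.exp_nonneg _)]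
  exact (Real.le_exp_log _).trans (Real.exp_le_exp.2 hn.le)

lemma tendsto_log_norm_div_of_le_of_expGrowthLE {E F : Type*} [NormedAddCommGroup E]
    [SeminormedAddCommGroup F] {x : ℕ → E} {y : ℕ → F} {m : ℝ} (hx : ∀ n, x n ≠ 0)
    (hxy : ∀ n, ‖x n‖ ≤ ‖y n‖) (hxm : Tendsto (fun n : ℕ => Real.log ‖x n‖ / n) atTop (𝓝 m))
    (hy : ExpGrowthLE y m) : Tendsto (fun n : ℕ => Real.log ‖y n‖ / n) atTop (𝓝 m) := by
  refine tendsto_order.2 ⟨fun c hc => ?_, fun c hc => ?_⟩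
  · filter_upwards [hxm.eventually_const_lt hc] with n hn
    have hlog := Real.log_le_log (norm_pos_iff.2 (hx n)) (hxy n)
    exact hn.trans_le (by gcongr)
  · obtain ⟨c', hmc', hc'c⟩ := exists_between hc
    obtain ⟨C, hC, hbound⟩ := (hy c' hmc').exists_pos
    have hlim : Tendsto (fun n : ℕ => Real.log C / n + c') atTop (𝓝 (0 + c')) :=
      (tendsto_const_div_atTop_nhds_zero_nat _).add_const c'
    rw [zero_add] at hlim
    filter_upwards [hlim.eventually_lt_const hc'c, hbound.bound, eventually_gt_atTop 0]
      with n hn hyn hpos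
    have hy0 : 0 < ‖y n‖ := (norm_pos_iff.2 (hx n)).trans_le (hxy n)
    have hn0 : (0 : ℝ) < n := by exact_mod_cast hpos
    rw [Real.norm_of_nonneg (Real.exp_nonneg _)] at hyn
    refine lt_of_le_of_lt ?_ hn
    calc Real.log ‖y n‖ / n ≤ Real.log (C * Real.exp (c' * n)) / n := by
          gcongr
      _ = Real.log C / n + c' := by
          rw [Real.log_mul hC.ne' (Real.exp_ne_zero _), Real.log_exp]
          field_simp

lemma tendsto_div_nat_zero_of_tendsto_sum_div {x : ℕ → ℝ} {l : ℝ}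
    (h : Tendsto (fun n : ℕ => (∑ j ∈ Finset.range n, x j) / n) atTop (𝓝 l)) :
    Tendsto (fun n : ℕ => x n / n) atTop (𝓝 0) := by
  have hratio : Tendsto (fun n : ℕ => 1 + 1 / (n : ℝ)) atTop (𝓝 (1 + 0)) :=
    tendsto_const_nhds.add tendsto_one_div_atTop_nhds_zero_nat
  have hlim := (((tendsto_add_atTop_iff_nat 1).2 h).mul hratio).sub h
  rw [add_zero, mul_one, sub_self] at hlim
  refine hlim.congr' ?_
  filter_upwards [eventually_gt_atTop 0] with n hn
  have hn0 : (n : ℝ) ≠ 0 := by exact_mod_cast hn.ne'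
  rw [Finset.sum_range_succ]
  push_cast
  field_simp
  ring

end Growth
section Ergodic

variable {α : Type*} {T : α → α} {f : α → ℝ}

lemma bddAbove_range_birkhoffSum_comp_iff (x : α) :
    BddAbove (Set.range fun n => birkhoffSum T f n (T x)) ↔
      BddAbove (Set.range fun n => birkhoffSum T f n x) := by
  simp only [bddAbove_def, Set.forall_mem_range]
  constructor
  · rintro ⟨C, hC⟩
    refine ⟨max 0 (f x + C), fun n => ?_⟩
    cases n with
    | zero => simp
    | succ n =>
      rw [birkhoffSum_succ']
      exact le_max_of_le_right (by gcongr; exact hC n)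
  · rintro ⟨C, hC⟩
    refine ⟨C - f x, fun n => ?_⟩
    have := hC (n + 1)
    rw [birkhoffSum_succ'] at this
    linarith

/-- The running maximum `max_{0 ≤ k ≤ n} S_k f` of the Birkhoff sums, the empty sum included. -/
def birkhoffMax (T : α → α) (f : α → ℝ) (n : ℕ) (x : α) : ℝ :=
  partialSups (fun k => birkhoffSum T f k x) n

lemma birkhoffMax_mono (x : α) : Monotone fun n => birkhoffMax T f n x :=
  partialSups_monotone _

lemma birkhoffMax_nonneg (n : ℕ) (x : α) : 0 ≤ birkhoffMax T f n x := by
  simpa [birkhoffMax] using birkhoffMax_mono (T := T) (f := f) x n.zero_le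

lemma birkhoffMax_succ (n : ℕ) (x : α) :
    birkhoffMax T f (n + 1) x = max 0 (f x + birkhoffMax T f n (T x)) := by
  simp only [birkhoffMax, partialSups_add_one', Nat.bot_eq_zero, birkhoffSum_zero,
    Function.comp_def, birkhoffSum_succ', partialSups_const_add]

lemma birkhoffMax_succ_sub (n : ℕ) (x : α) :
    birkhoffMax T f (n + 1) x - birkhoffMax T f n (T x) =
      max (-birkhoffMax T f n (T x)) (f x) := by
  rw [birkhoffMax_succ, ← max_sub_sub_right, zero_sub, add_sub_cancel_right]

lemma abs_birkhoffMax_succ_sub_le (n : ℕ) (x : α) :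
    |birkhoffMax T f (n + 1) x - birkhoffMax T f n (T x)| ≤ |f x| := by
  rw [birkhoffMax_succ_sub, abs_le]
  exact ⟨le_max_of_le_right (neg_abs_le _),
    max_le (by linarith [birkhoffMax_nonneg (T := T) (f := f) n (T x), abs_nonneg (f x)])
      (le_abs_self _)⟩

lemma tendsto_birkhoffMax_succ_sub {x : α}
    (hx : ¬BddAbove (Set.range fun n => birkhoffSum T f n x)) :
    Tendsto (fun n => birkhoffMax T f (n + 1) x - birkhoffMax T f n (T x)) atTop (𝓝 (f x)) := by
  rw [← bddAbove_range_birkhoffSum_comp_iff, ← bddAbove_range_partialSups] at hx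
  have hlim : Tendsto (fun n => birkhoffMax T f n (T x)) atTop atTop :=
    tendsto_atTop_atTop_of_monotone' (birkhoffMax_mono _) hx
  refine tendsto_const_nhds.congr' ?_
  filter_upwards [hlim.eventually_ge_atTop (-f x)] with n hn
  rw [birkhoffMax_succ_sub, max_eq_right (by linarith)]

variable [MeasurableSpace α] {μ : Measure α}

lemma integrable_birkhoffMax (hT : MeasurePreserving T μ μ) (hf : Integrable f μ) (n : ℕ) :
    Integrable (birkhoffMax T f n) μ := by
  induction n with
  | zero =>
    have hzero : birkhoffMax T f 0 = 0 := funext fun x => by simp [birkhoffMax]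
    exact hzero ▸ integrable_zero _ _ _
  | succ n ih =>
    have hsucc : birkhoffMax T f (n + 1) = fun x => max 0 (f x + birkhoffMax T f n (T x)) :=
      funext (birkhoffMax_succ n)
    rw [hsucc]
    exact (integrable_zero _ _ _).sup (hf.add (hT.integrable_comp_of_integrable ih))

lemma integral_birkhoffMax_succ_sub_nonneg (hT : MeasurePreserving T μ μ) (hf : Integrable f μ)
    (n : ℕ) : 0 ≤ ∫ x, (birkhoffMax T f (n + 1) x - birkhoffMax T f n (T x)) ∂μ := by
  have hint := integrable_birkhoffMax hT hf
  have hcomp : ∫ x, birkhoffMax T f n (T x) ∂μ = ∫ x, birkhoffMax T f n x ∂μ := by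
    rw [← integral_map hT.aemeasurable (by rw [hT.map_eq]; exact (hint n).1), hT.map_eq]
  have hintcomp : Integrable (fun x => birkhoffMax T f n (T x)) μ :=
    hT.integrable_comp_of_integrable (hint n)
  rw [integral_sub (hint _) hintcomp, hcomp, sub_nonneg]
  exact integral_mono (hint _) (hint _) fun x => birkhoffMax_mono x n.le_succ

lemma integral_nonneg_of_ae_not_bddAbove_birkhoffSum (hT : MeasurePreserving T μ μ)
    (hf : Integrable f μ) (h : ∀ᵐ x ∂μ, ¬BddAbove (Set.range fun n => birkhoffSum T f n x)) :
    0 ≤ ∫ x, f x ∂μ := by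
  have hint := integrable_birkhoffMax hT hf
  refine ge_of_tendsto' (tendsto_integral_of_dominated_convergence (fun x => |f x|)
    (fun n => ((hint _).sub (hT.integrable_comp_of_integrable (hint n))).1) hf.abs
    (fun n => ae_of_all _ fun x => abs_birkhoffMax_succ_sub_le n x) ?_)
    (integral_birkhoffMax_succ_sub_nonneg hT hf)
  filter_upwards [h] with x hx using tendsto_birkhoffMax_succ_sub hx

lemma nullMeasurableSet_bddAbove_range_birkhoffSum (hT : Measure.QuasiMeasurePreserving T μ μ)
    (hf : AEMeasurable f μ) :
    NullMeasurableSet {x | BddAbove (Set.range fun n => birkhoffSum T f n x)} μ := by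
  have hmeas : MeasurableSet {x | BddAbove (Set.range fun n => birkhoffSum T (hf.mk f) n x)} :=
    measurableSet_bddAbove_range fun n => Finset.measurable_sum _ fun k _ =>
      hf.measurable_mk.comp (hT.measurable.iterate k)
  refine hmeas.nullMeasurableSet.congr (eventuallyEq_set.2 ?_)
  filter_upwards [ae_all_iff.2 fun n => hT.birkhoffSum_ae_eq_of_ae_eq hf.ae_eq_mk n] with x hx
  simp only [hx]

lemma ae_bddAbove_range_birkhoffSum_of_integral_neg (hT : Ergodic T μ) (hf : Integrable f μ)
    (hneg : ∫ x, f x ∂μ < 0) : ∀ᵐ x ∂μ, BddAbove (Set.range fun n => birkhoffSum T f n x) := by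
  have hinv : T ⁻¹' {x | BddAbove (Set.range fun n => birkhoffSum T f n x)} =
      {x | BddAbove (Set.range fun n => birkhoffSum T f n x)} :=
    Set.ext bddAbove_range_birkhoffSum_comp_iff
  refine (hT.quasiErgodic.ae_mem_or_ae_notMem₀ (nullMeasurableSet_bddAbove_range_birkhoffSum
    hT.quasiErgodic.toQuasiMeasurePreserving hf.1.aemeasurable) hinv.eventuallyEq).resolve_right
    fun h => hneg.not_ge ?_
  exact integral_nonneg_of_ae_not_bddAbove_birkhoffSum hT.toMeasurePreserving hf h

lemma ae_eventually_birkhoffAverage_lt [IsProbabilityMeasure μ] (hT : Ergodic T μ)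
    (hf : Integrable f μ) {c : ℝ} (hc : ∫ x, f x ∂μ < c) :
    ∀ᵐ x ∂μ, ∀ᶠ n in atTop, birkhoffAverage ℝ T f n x < c := by
  obtain ⟨c', hc', hc'c⟩ := exists_between hc
  have hneg : ∫ x, (f x - c') ∂μ < 0 := by
    rw [integral_sub hf (integrable_const _)]
    simpa using hc'
  filter_upwards [ae_bddAbove_range_birkhoffSum_of_integral_neg hT (hf.sub (integrable_const c'))
    hneg] with x ⟨C, hC⟩
  have hlim : Tendsto (fun n : ℕ => C / n + c') atTop (𝓝 (0 + c')) :=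
    (tendsto_const_div_atTop_nhds_zero_nat _).add_const c'
  rw [zero_add] at hlim
  filter_upwards [hlim.eventually_lt_const hc'c, eventually_gt_atTop 0] with n hn hpos
  have : (0 : ℝ) < n := by exact_mod_cast hpos
  have hCn : birkhoffSum T f n x - n * c' ≤ C := by
    simpa [birkhoffSum, Finset.sum_sub_distrib] using hC (Set.mem_range_self n)
  refine lt_of_le_of_lt ?_ hn
  calc birkhoffAverage ℝ T f n x = birkhoffSum T f n x / n := by
        rw [birkhoffAverage, smul_eq_mul, inv_mul_eq_div]
    _ ≤ (C + n * c') / n := by gcongr; linarith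
    _ = C / n + c' := by field_simp

theorem ae_tendsto_birkhoffAverage [IsProbabilityMeasure μ] (hT : Ergodic T μ)
    (hf : Integrable f μ) :
    ∀ᵐ x ∂μ, Tendsto (fun n => birkhoffAverage ℝ T f n x) atTop (𝓝 (∫ x, f x ∂μ)) := by
  obtain ⟨u, -, hu, hulim⟩ := exists_seq_strictAnti_tendsto (∫ x, f x ∂μ)
  obtain ⟨v, -, hv, hvlim⟩ := exists_seq_strictMono_tendsto (∫ x, f x ∂μ)
  have hupper := ae_all_iff.2 fun i => ae_eventually_birkhoffAverage_lt hT hf (hu i)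
  have hlower := ae_all_iff.2 fun i => ae_eventually_birkhoffAverage_lt hT hf.neg (c := -v i)
    (by simpa [integral_neg] using hv i)
  filter_upwards [hupper, hlower] with x hx hx'
  refine tendsto_order.2 ⟨fun c hc => ?_, fun c hc => ?_⟩
  · obtain ⟨i, hi⟩ := (hvlim.eventually_const_lt hc).exists
    filter_upwards [hx' i] with n hn
    rw [birkhoffAverage_neg, Pi.neg_apply, Pi.neg_apply, neg_lt_neg_iff] at hn
    exact hi.trans hn
  · obtain ⟨i, hi⟩ := (hulim.eventually_lt_const hc).exists
    filter_upwards [hx i] with n hn using hn.trans hi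

end Ergodic

section Circle

lemma e_eq_toCircle (k : ℝ) : e k = (AddCircle.toCircle (k : UnitAddCircle) : ℂ) := by
  rw [AddCircle.toCircle_apply_mk, Circle.coe_exp, e]
  push_cast
  ring_nf

lemma e_eq_circleMap (k : ℝ) : e k = circleMap 0 1 (2 * Real.pi * k) := by
  rw [e, circleMap]
  push_cast
  ring_nf

lemma e_natCast_mul (L : ℕ) (k : ℝ) : e (L * k) = e k ^ L := by
  rw [e, e, ← Complex.exp_nat_mul]
  push_cast
  ring_nf

lemma norm_e (k : ℝ) : ‖e k‖ = 1 := by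
  rw [e_eq_toCircle, Circle.norm_coe]

lemma exists_norm_eval_e_le (p : ℂ[X]) : ∃ C, ∀ k, ‖p.eval (e k)‖ ≤ C := by
  obtain ⟨C, hC⟩ := (isCompact_sphere (0 : ℂ) 1).exists_bound_of_continuousOn p.continuousOn
  exact ⟨C, fun k => hC _ (mem_sphere_zero_iff_norm.2 (norm_e k))⟩

lemma logMahler_eq_logMahlerMeasure (p : ℂ[X]) : logMahler p = p.logMahlerMeasure := by
  simp only [logMahler, e_eq_circleMap, logMahlerMeasure_def, Real.circleAverage_def]
  rw [intervalIntegral.integral_comp_mul_left (fun x => Real.log ‖p.eval (circleMap 0 1 x)‖)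
    Real.two_pi_pos.ne', mul_zero, mul_one]

lemma intervalIntegrable_log_norm_eval_e (p : ℂ[X]) :
    IntervalIntegrable (fun k => Real.log ‖p.eval (e k)‖) volume 0 1 := by
  have h := p.intervalIntegrable_mahlerMeasure.comp_mul_left (c := 2 * Real.pi)
  rw [zero_div, div_self Real.two_pi_pos.ne'] at h
  simpa only [e_eq_circleMap] using h

lemma logMahler_map_intCast_nonneg {q : ℤ[X]} (hq : q ≠ 0) :
    0 ≤ logMahler (q.map (Int.castRingHom ℂ)) := by
  rw [logMahler_eq_logMahlerMeasure, logMahlerMeasure_eq_log_MahlerMeasure]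
  exact Real.log_nonneg (one_le_mahlerMeasure_of_ne_zero hq)

/-- The function `log |p|` on the unit circle, which is parametrized by `ℝ / ℤ` so that
multiplication by `L` acts on it; it takes the value `0` at the zeros of `p`. -/
def circleLogNorm (p : ℂ[X]) (x : UnitAddCircle) : ℝ :=
  Real.log ‖p.eval (AddCircle.toCircle x : ℂ)‖

lemma circleLogNorm_coe (p : ℂ[X]) (k : ℝ) :
    circleLogNorm p (k : UnitAddCircle) = Real.log ‖p.eval (e k)‖ := by
  rw [e_eq_toCircle, circleLogNorm]

lemma measurable_circleLogNorm (p : ℂ[X]) : Measurable (circleLogNorm p) :=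
  Real.measurable_log.comp (p.continuous.comp
    (continuous_subtype_val.comp AddCircle.continuous_toCircle)).norm.measurable

lemma integrable_circleLogNorm (p : ℂ[X]) : Integrable (circleLogNorm p) := by
  rw [← (UnitAddCircle.measurePreserving_mk 0).integrable_comp
    (measurable_circleLogNorm p).aestronglyMeasurable]
  have h := intervalIntegrable_log_norm_eval_e p
  rw [intervalIntegrable_iff_integrableOn_Ioc_of_le zero_le_one] at h
  simpa only [Function.comp_def, circleLogNorm_coe, zero_add, IntegrableOn] using h

lemma integral_circleLogNorm (p : ℂ[X]) : ∫ x, circleLogNorm p x = logMahler p := by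
  simp only [← UnitAddCircle.intervalIntegral_preimage 0, logMahler, circleLogNorm_coe, zero_add]

lemma ae_coe_unitAddCircle {P : UnitAddCircle → Prop} (h : ∀ᵐ x, P x) :
    ∀ᵐ k : ℝ, P (k : UnitAddCircle) := by
  have hcells : ∀ t : ℤ, ∀ᵐ k : ℝ ∂volume.restrict (Set.Ioc (t : ℝ) (t + 1)),
      P (k : UnitAddCircle) :=
    fun t => (UnitAddCircle.measurePreserving_mk (t : ℝ)).quasiMeasurePreserving.ae h
  have hunion := (ae_restrict_iUnion_iff _ _).2 hcells
  rwa [iUnion_Ioc_intCast, Measure.restrict_univ] at hunion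

lemma iterate_nsmul_coe_unitAddCircle (L j : ℕ) (k : ℝ) :
    (L • · : UnitAddCircle → UnitAddCircle)^[j] k = ((L ^ j * k : ℝ) : UnitAddCircle) := by
  rw [smul_iterate_apply, ← AddCircle.coe_nsmul, nsmul_eq_mul, Nat.cast_pow]

instance nontrivial_unitAddCircle : Nontrivial UnitAddCircle :=
  have : Infinite (Set.Ico (0 : ℝ) (0 + 1)) := Set.Ico.infinite (by norm_num)
  (AddCircle.equivIco 1 0).nontrivial

lemma ae_eval_toCircle_ne_zero {p : ℂ[X]} (hp : p ≠ 0) :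
    ∀ᵐ x : UnitAddCircle, p.eval (AddCircle.toCircle x : ℂ) ≠ 0 := by
  have : NullSingletonClass (volume : Measure UnitAddCircle) :=
    Measure.IsAddHaarMeasure.nullSingletonClass _
  have hinj : Function.Injective fun x : UnitAddCircle => (AddCircle.toCircle x : ℂ) :=
    Subtype.val_injective.comp (AddCircle.injective_toCircle one_ne_zero)
  exact measure_eq_zero_iff_ae_notMem.1
    (((finite_setOfPred_isRoot hp).preimage hinj.injOn).measure_zero volume)

variable {L : ℕ}

lemma ae_forall_eval_e_pow_mul_ne_zero (hL : 2 ≤ L) {p : ℂ[X]} (hp : p ≠ 0) :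
    ∀ᵐ k : ℝ, ∀ j : ℕ, p.eval (e (L ^ j * k)) ≠ 0 := by
  have hT : Ergodic (L • · : UnitAddCircle → UnitAddCircle) := AddCircle.ergodic_nsmul hL
  have hcircle := ae_all_iff.2 fun j : ℕ =>
    (hT.toMeasurePreserving.iterate j).quasiMeasurePreserving.ae (ae_eval_toCircle_ne_zero hp)
  filter_upwards [ae_coe_unitAddCircle hcircle] with k hk j
  simpa only [iterate_nsmul_coe_unitAddCircle, e_eq_toCircle] using hk j

lemma ae_tendsto_sum_log_norm_eval_e_div (hL : 2 ≤ L) (p : ℂ[X]) :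
    ∀ᵐ k : ℝ, Tendsto
      (fun n : ℕ => (∑ j ∈ Finset.range n, Real.log ‖p.eval (e (L ^ j * k))‖) / n) atTop
      (𝓝 (logMahler p)) := by
  have hT : Ergodic (L • · : UnitAddCircle → UnitAddCircle) := AddCircle.ergodic_nsmul hL
  have : IsProbabilityMeasure (volume : Measure UnitAddCircle) := ⟨UnitAddCircle.measure_univ⟩
  have hBirkhoff := ae_tendsto_birkhoffAverage hT (integrable_circleLogNorm p)
  filter_upwards [ae_coe_unitAddCircle hBirkhoff] with k hk
  simpa only [birkhoffAverage, birkhoffSum, iterate_nsmul_coe_unitAddCircle, circleLogNorm_coe,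
    integral_circleLogNorm, smul_eq_mul, inv_mul_eq_div] using hk

end Circle

section TriConj

/-- The matrix with row eigenvector `(1, 1)` for the eigenvalue `σ` and column eigenvector
`(1, -1)` for the eigenvalue `δ`: up to a fixed change of basis, the general triangular
`2 × 2` matrix. The remaining parameter `c` is the lower left entry. -/
def triConj {R : Type*} [CommRing R] (σ δ c : R) : Matrix (Fin 2) (Fin 2) R :=
  !![σ - c, σ - c - δ; c, c + δ]

lemma triConj_one_one_zero {R : Type*} [CommRing R] : triConj (1 : R) 1 0 = 1 := by
  simp [triConj, Matrix.one_fin_two]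

lemma triConj_mul_triConj {R : Type*} [CommRing R] (σ δ c σ' δ' c' : R) :
    triConj σ δ c * triConj σ' δ' c' = triConj (σ * σ') (δ * δ') (c * σ' + δ * c') := by
  ext i j
  fin_cases i <;> fin_cases j <;> simp [triConj] <;> ring

lemma triConj_eq_smul_add_smul_add_smul {R : Type*} [CommRing R] (σ δ c : R) :
    triConj σ δ c = σ • triConj 1 0 0 + δ • triConj 0 1 0 + c • triConj 0 0 1 := by
  ext i j
  fin_cases i <;> fin_cases j <;> simp [triConj] <;> ring

lemma prod_map_range_triConj {K : Type*} [Field K] {t : ℕ → K} (ht : ∀ n, t n ≠ 0)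
    (d b : ℕ → K) (n : ℕ) :
    ((List.range n).map fun j => triConj (t (j + 1) / t j) (d j) (b j)).prod =
      triConj (t n / t 0) (∏ j ∈ Finset.range n, d j)
        (t n * ∑ j ∈ Finset.range n, (∏ i ∈ Finset.range j, d i) * b j / t (j + 1)) := by
  induction n with
  | zero => simp [ht 0, triConj_one_one_zero]
  | succ n ih =>
    have hn := ht n
    have hn' := ht (n + 1)
    rw [List.range_succ, List.map_append, List.prod_append, ih, List.map_singleton,
      List.prod_singleton, triConj_mul_triConj, Finset.prod_range_succ, Finset.sum_range_succ]
    congr 1 <;> field_simp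

open scoped Matrix.Norms.L2Operator

lemma opNorm_eq_norm (M : Matrix (Fin 2) (Fin 2) ℂ) : opNorm M = ‖M‖ :=
  rfl

variable {𝕜 : Type*} [RCLike 𝕜]

lemma norm_le_norm_triConj (σ δ c : 𝕜) : ‖δ‖ ≤ ‖triConj σ δ c‖ := by
  let v : EuclideanSpace 𝕜 (Fin 2) := !₂[1, -1]
  have hv : v ≠ 0 := fun h => one_ne_zero (congrArg (· 0) h)
  have heigen : Matrix.toEuclideanCLM (𝕜 := 𝕜) (triConj σ δ c) v = δ • v := by
    ext i
    fin_cases i <;> simp [v, triConj]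
  refine le_of_mul_le_mul_right ?_ (norm_pos_iff.2 hv)
  rw [← norm_smul, ← heigen]
  exact (Matrix.toEuclideanCLM (𝕜 := 𝕜) (triConj σ δ c)).le_opNorm v

lemma expGrowthLE_triConj {σ δ c : ℕ → 𝕜} {m : ℝ} (hσ : ExpGrowthLE σ m) (hδ : ExpGrowthLE δ m)
    (hc : ExpGrowthLE c m) : ExpGrowthLE (fun n => triConj (σ n) (δ n) (c n)) m := by
  simpa only [← triConj_eq_smul_add_smul_add_smul] using
    ((hσ.smul_const (triConj (1 : 𝕜) 0 0)).add (hδ.smul_const (triConj (0 : 𝕜) 1 0))).add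
      (hc.smul_const (triConj (0 : 𝕜) 0 1))

lemma tendsto_log_norm_prod_triConj_div {t d b : ℕ → 𝕜} {m : ℝ} (hm : 0 ≤ m)
    (ht : ∀ n, t n ≠ 0) (hd : ∀ n, d n ≠ 0)
    (htlim : Tendsto (fun n : ℕ => Real.log ‖t n‖ / n) atTop (𝓝 0))
    (hdlim : Tendsto (fun n : ℕ => (∑ j ∈ Finset.range n, Real.log ‖d j‖) / n) atTop (𝓝 m))
    (hb : ExpGrowthLE b 0) :
    Tendsto (fun n : ℕ => Real.log ‖((List.range n).map fun j =>
      triConj (t (j + 1) / t j) (d j) (b j)).prod‖ / n) atTop (𝓝 m) := by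
  simp only [prod_map_range_triConj ht]
  have hDlim : Tendsto (fun n : ℕ => Real.log ‖∏ j ∈ Finset.range n, d j‖ / n) atTop (𝓝 m) := by
    simpa only [norm_prod, Real.log_prod fun j _ => norm_ne_zero_iff.2 (hd j)] using hdlim
  have hD := expGrowthLE_of_tendsto_log_norm_div hDlim
  have htgrowth := expGrowthLE_of_tendsto_log_norm_div htlim
  have htinv : ExpGrowthLE (fun n => (t n)⁻¹) 0 :=
    expGrowthLE_of_tendsto_log_norm_div (by
      simpa only [norm_inv, Real.log_inv, neg_div, neg_zero] using htlim.neg)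
  have hσ : ExpGrowthLE (fun n => t n / t 0) m := by
    simpa only [div_eq_mul_inv, smul_eq_mul] using (htgrowth.mono hm).smul_const (t 0)⁻¹
  have hterm : ExpGrowthLE (fun j => (∏ i ∈ Finset.range j, d i) * b j / t (j + 1)) m := by
    simpa only [div_eq_mul_inv, add_zero] using (hD.mul hb).mul htinv.comp_add_one
  have hc := htgrowth.mul (hterm.sum_range hm)
  rw [zero_add] at hc
  exact tendsto_log_norm_div_of_le_of_expGrowthLE
    (fun n => Finset.prod_ne_zero_iff.2 fun j _ => hd j) (fun n => norm_le_norm_triConj _ _ _) hDlim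
    (expGrowthLE_triConj hσ hD hc)

end TriConj

section Substitution

variable {L : ℕ}

lemma logMahler_posPoly_sub_nonneg {S S' : Finset (Fin L)} (h : posPoly S ≠ posPoly S') :
    0 ≤ logMahler (posPoly S - posPoly S') := by
  let q : ℤ[X] := ∑ z ∈ S, X ^ (z : ℕ) - ∑ z ∈ S', X ^ (z : ℕ)
  have hq : q.map (Int.castRingHom ℂ) = posPoly S - posPoly S' := by
    simp [q, posPoly, Polynomial.map_sum]
  have hq0 : q ≠ 0 := by
    intro h0
    rw [h0, Polynomial.map_zero, eq_comm, sub_eq_zero] at hq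
    exact h hq
  exact hq ▸ logMahler_map_intCast_nonneg hq0

variable (wa wb : Fin L → Fin 2)

lemma posPoly_Ca_add_Cb_add_Pa_add_Pb :
    posPoly (Ca wa wb) + posPoly (Cb wa wb) + posPoly (Pa wa wb) + posPoly (Pb wa wb) =
      ∑ i ∈ Finset.range L, (X : ℂ[X]) ^ i := by
  simp only [posPoly, Ca, Cb, Pa, Pb, Finset.sum_filter, ← Finset.sum_add_distrib,
    ← Fin.sum_univ_eq_sum_range]
  refine Finset.sum_congr rfl fun i _ => ?_
  generalize wa i = x
  generalize wb i = y
  fin_cases x <;> fin_cases y <;> simp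

lemma FourierB_eq_triConj {k : ℝ} (hk : e k ≠ 1) :
    FourierB wa wb k = triConj ((e (L * k) - 1) / (e k - 1))
      ((posPoly (Pa wa wb) - posPoly (Pb wa wb)).eval (e k))
      ((posPoly (Cb wa wb) + posPoly (Pb wa wb)).eval (e k)) := by
  have hsum := congrArg (eval (e k)) (posPoly_Ca_add_Cb_add_Pa_add_Pb wa wb)
  simp only [eval_add, eval_geom_sum, geom_sum_eq hk] at hsum
  rw [e_natCast_mul, ← hsum]
  ext i j
  fin_cases i <;> fin_cases j <;> simp [FourierB, triConj] <;> ring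

lemma cocycleProd_eq_prod_triConj {k : ℝ} (hk : ∀ n : ℕ, e (L ^ n * k) ≠ 1) (n : ℕ) :
    cocycleProd wa wb k n = ((List.range n).map fun j =>
      triConj ((e (L ^ (j + 1) * k) - 1) / (e (L ^ j * k) - 1))
        ((posPoly (Pa wa wb) - posPoly (Pb wa wb)).eval (e (L ^ j * k)))
        ((posPoly (Cb wa wb) + posPoly (Pb wa wb)).eval (e (L ^ j * k)))).prod := by
  simp only [cocycleProd, FourierB_eq_triConj wa wb (hk _), pow_succ', mul_assoc]

end Substitution

/-- For a binary constant-length substitution of length `L ≥ 2` with `Q ≠ R`,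
for Lebesgue-a.e. `k` the limit `lim (1/n) log ‖B(k)·B(Lk)⋯B(L^{n-1}k)‖` exists and equals the
logarithmic Mahler measure `m(Q - R)`; equivalently the minimal Lyapunov exponent of the outward
cocycle is `log √L - m(Q - R)` almost everywhere. -/
theorem binary_substitution_min_Lyapunov_exponent
    (L : ℕ) (hL : 2 ≤ L) (wa wb : Fin L → Fin 2)
    (hQR : posPoly (Pa wa wb) ≠ posPoly (Pb wa wb)) :
    ∀ᵐ k : ℝ,
      Tendsto (fun n : ℕ => (1 / n : ℝ) * Real.log (opNorm (cocycleProd wa wb k n)))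
        atTop (nhds (logMahler (posPoly (Pa wa wb) - posPoly (Pb wa wb)))) := by
  have hp : posPoly (Pa wa wb) - posPoly (Pb wa wb) ≠ 0 := sub_ne_zero.2 hQR
  filter_upwards [ae_forall_eval_e_pow_mul_ne_zero hL (X_sub_C_ne_zero (1 : ℂ)),
    ae_forall_eval_e_pow_mul_ne_zero hL hp,
    ae_tendsto_sum_log_norm_eval_e_div hL (X - C 1),
    ae_tendsto_sum_log_norm_eval_e_div hL (posPoly (Pa wa wb) - posPoly (Pb wa wb))]
    with k ht hd htlim hdlim
  simp only [eval_sub, eval_X, eval_C] at ht htlim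
  obtain ⟨K, hK⟩ := exists_norm_eval_e_le (posPoly (Cb wa wb) + posPoly (Pb wa wb))
  have hlim := tendsto_log_norm_prod_triConj_div (logMahler_posPoly_sub_nonneg hQR) ht hd
    (tendsto_div_nat_zero_of_tendsto_sum_div htlim) hdlim
    (expGrowthLE_zero_of_norm_le fun j => hK (L ^ j * k))
  refine hlim.congr fun n => ?_
  rw [cocycleProd_eq_prod_triConj wa wb (fun j => sub_ne_zero.1 (ht j)), opNorm_eq_norm,
    one_div_mul_eq_div]
end
end

section
/- Let f be a nonzero polynomial with complex coefficients which is not a monomial (not of the form c·X^n). Then Jensen's inequality is strict for f: exp(∫₀¹ log|f(e^{2πik})| dk) < ∫₀¹ |f(e^{2πik})| dk. -/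
open Polynomial

noncomputable section

/-!
Unless `|f|` is almost everywhere constant on the unit circle, the inequality is the strict Jensen
inequality for `exp` and `log |f|`. If `|f|` is almost everywhere constant, then `f(z) conj(f(z))`
takes a single value `a` at infinitely many `z` on the circle. Since `conj(z) = z⁻¹`, the reversed
conjugate polynomial takes the value `zⁿ conj(f(z))` at such `z`, where `n = deg f`, so its product
with `f` is `a Xⁿ`, and the divisors of a monomial are monomials.
-/

open MeasureTheory Real

theorem eq_C_mul_X_pow_of_natDegree_le_natTrailingDegree {R : Type*} [Semiring R] {f : R[X]}
    (h : f.natDegree ≤ f.natTrailingDegree) : f = C f.leadingCoeff * X ^ f.natDegree := by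
  refine (C_mul_X_pow_eq_self (Finset.card_le_one.2 fun i hi j hj ↦ ?_)).symm
  have := le_natDegree_of_mem_supp i hi
  have := le_natDegree_of_mem_supp j hj
  have := natTrailingDegree_le_of_mem_supp i hi
  have := natTrailingDegree_le_of_mem_supp j hj
  lia

theorem eq_C_mul_X_pow_of_mul_eq_C_mul_X_pow {R : Type*} [Semiring R] [NoZeroDivisors R]
    {f g : R[X]} {a : R} (ha : a ≠ 0) {n : ℕ} (h : f * g = C a * X ^ n) :
    f = C f.leadingCoeff * X ^ f.natDegree := by
  have hfg : f * g ≠ 0 := by simpa [h, C_mul_X_pow_eq_monomial] using ha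
  obtain ⟨hf, hg⟩ := ne_zero_and_ne_zero_of_mul hfg
  have hdeg : f.natDegree + g.natDegree = n := by
    rw [← natDegree_mul hf hg, h, natDegree_C_mul_X_pow n a ha]
  have htrailing : f.natTrailingDegree + g.natTrailingDegree = n := by
    rw [← natTrailingDegree_mul hf hg, h, C_mul_X_pow_eq_monomial, natTrailingDegree_monomial ha]
  have := g.natTrailingDegree_le_natDegree
  exact eq_C_mul_X_pow_of_natDegree_le_natTrailingDegree (by lia)

theorem eval_reverse_map_starRingEnd {R : Type*} [CommSemiring R] [StarRing R] (f : R[X]) {z : R}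
    (hz : z * star z = 1) :
    (f.map (starRingEnd R)).reverse.eval z = star (f.eval z) * z ^ f.natDegree := by
  let _ : Invertible (star z) := ⟨z, hz, by rw [mul_comm, hz]⟩
  have hinv : ⅟(star z) = z := rfl
  have hrev := eval₂_reverse_mul_pow (RingHom.id R) (star z) (f.map (starRingEnd R))
  have hval : (f.map (starRingEnd R)).eval (star z) = star (f.eval z) := by
    rw [eval_map]
    exact eval₂_hom (starRingEnd R) z
  rw [hinv, eval₂_id, eval₂_id, hval,
    natDegree_map_eq_of_injective (f := starRingEnd R) star_injective] at hrev
  rw [← hrev, mul_assoc, ← mul_pow, mul_comm (star z), hz, one_pow, mul_one]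

theorem eq_C_mul_X_pow_of_infinite_eval_mul_star_eq {R : Type*} [CommRing R] [IsDomain R]
    [StarRing R] {f : R[X]} {a : R}
    (h : {z : R | z * star z = 1 ∧ f.eval z * star (f.eval z) = a}.Infinite) :
    f = C f.leadingCoeff * X ^ f.natDegree := by
  rcases eq_or_ne a 0 with rfl | ha
  · have hf : f = 0 := eq_zero_of_infinite_isRoot f (h.mono fun z hz ↦ by simpa using hz.2)
    simp [hf]
  · have hmul : f * (f.map (starRingEnd R)).reverse = C a * X ^ f.natDegree := by
      refine eq_of_infinite_eval_eq _ _ (h.mono ?_)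
      rintro z ⟨hz, hfz⟩
      simp [eval_reverse_map_starRingEnd f hz, ← mul_assoc, hfz]
    exact eq_C_mul_X_pow_of_mul_eq_C_mul_X_pow ha hmul

theorem eq_C_mul_X_pow_of_infinite_norm_eval_eq {f : ℂ[X]} {A : ℝ}
    (h : {z : ℂ | ‖z‖ = 1 ∧ ‖f.eval z‖ = A}.Infinite) :
    f = C f.leadingCoeff * X ^ f.natDegree := by
  refine eq_C_mul_X_pow_of_infinite_eval_mul_star_eq (a := (A : ℂ) ^ 2) (h.mono ?_)
  rintro z ⟨hz, hfz⟩
  simp [Complex.mul_conj', hz, hfz]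

theorem ae_eq_const_or_exp_average_log_lt {α : Type*} [MeasurableSpace α] {μ : Measure α}
    [IsFiniteMeasure μ] {f : α → ℝ} (hpos : ∀ᵐ x ∂μ, 0 < f x) (hf : Integrable f μ)
    (hlog : Integrable (fun x ↦ log (f x)) μ) :
    (∀ᵐ x ∂μ, f x = exp (⨍ y, log (f y) ∂μ)) ∨ exp (⨍ x, log (f x) ∂μ) < ⨍ x, f x ∂μ := by
  have hexp : (fun x ↦ exp (log (f x))) =ᵐ[μ] f := hpos.mono fun x hx ↦ exp_log hx
  have jensen := strictConvexOn_exp.ae_eq_const_or_map_average_lt continuous_exp.continuousOn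
    isClosed_univ (by simp) hlog (hf.congr hexp.symm)
  rw [average_congr hexp] at jensen
  refine jensen.imp_left fun hconst ↦ ?_
  filter_upwards [hpos, hconst] with x hx hconstx
  rw [← exp_log hx, hconstx, Function.const_apply]

theorem ae_circleMap_notMem {s : Set ℂ} (hs : s.Countable) (c : ℂ) {R : ℝ} (hR : R ≠ 0) :
    ∀ᵐ θ, circleMap c R θ ∉ s :=
  (hs.preimage_circleMap c hR).ae_notMem volume

theorem not_countable_of_ae_circleMap_mem {s : Set ℂ} {c : ℂ} {R : ℝ} (hR : R ≠ 0)
    {μ : Measure ℝ} [NeZero μ] (hμ : μ ≪ volume) (h : ∀ᵐ θ ∂μ, circleMap c R θ ∈ s) :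
    ¬ s.Countable := fun hs ↦ by
  obtain ⟨θ, hmem, hnotMem⟩ := (h.and (hμ.ae_le (ae_circleMap_notMem hs c hR))).exists
  exact hnotMem hmem

theorem eq_C_mul_X_pow_of_ae_norm_eval_circleMap_eq {f : ℂ[X]} {A : ℝ} {μ : Measure ℝ} [NeZero μ]
    (hμ : μ ≪ volume) (h : ∀ᵐ θ ∂μ, ‖f.eval (circleMap 0 1 θ)‖ = A) :
    f = C f.leadingCoeff * X ^ f.natDegree := by
  have hmem : ∀ᵐ θ ∂μ, circleMap 0 1 θ ∈ {z : ℂ | ‖z‖ = 1 ∧ ‖f.eval z‖ = A} :=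
    h.mono fun θ hθ ↦ ⟨by simp, hθ⟩
  exact eq_C_mul_X_pow_of_infinite_norm_eval_eq fun hfin ↦
    not_countable_of_ae_circleMap_mem one_ne_zero hμ hmem hfin.countable

theorem mahlerMeasure_lt_circleAverage_norm {f : ℂ[X]}
    (hf : ¬ ∃ (c : ℂ) (n : ℕ), f = C c * X ^ n) :
    f.mahlerMeasure < circleAverage (fun z ↦ ‖f.eval z‖) 0 1 := by
  have hf₀ : f ≠ 0 := fun h ↦ hf ⟨0, 0, by simp [h]⟩
  set μ : Measure ℝ := volume.restrict (Set.uIoc 0 (2 * π))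
  have : NeZero μ := ⟨by simp [μ, Measure.restrict_eq_zero, Set.uIoc, pi_pos]⟩
  have : IsFiniteMeasure μ := ⟨by simp [μ, Set.uIoc]⟩
  have hpos : ∀ᵐ θ ∂μ, 0 < ‖f.eval (circleMap 0 1 θ)‖ := by
    filter_upwards [ae_restrict_of_ae
      (ae_circleMap_notMem (f.rootSet_finite ℂ).countable 0 one_ne_zero)] with θ hθ
    simpa [mem_rootSet, hf₀] using hθ
  have hnorm : Continuous fun θ ↦ ‖f.eval (circleMap 0 1 θ)‖ := by fun_prop
  have jensen := ae_eq_const_or_exp_average_log_lt hpos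
    (hnorm.intervalIntegrable 0 (2 * π)).def' f.intervalIntegrable_mahlerMeasure.def'
  rw [mahlerMeasure, if_pos hf₀, logMahlerMeasure, circleAverage_eq_intervalAverage,
    circleAverage_eq_intervalAverage]
  exact jensen.resolve_left fun hconst ↦ hf ⟨_, _, eq_C_mul_X_pow_of_ae_norm_eval_circleMap_eq
    Measure.absolutelyContinuous_restrict hconst⟩

theorem integral_comp_e_eq_circleAverage {E : Type*} [NormedAddCommGroup E] [NormedSpace ℝ E]
    (F : ℂ → E) : ∫ k in (0 : ℝ)..1, F (e k) = circleAverage F 0 1 := by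
  have he (k : ℝ) : e k = circleMap 0 1 (2 * π * k) := by
    simp [e, circleMap, mul_right_comm]
  simp_rw [he]
  rw [intervalIntegral.integral_comp_mul_left (fun θ ↦ F (circleMap 0 1 θ)) two_pi_pos.ne',
    mul_zero, mul_one, circleAverage_def]

/-- For a nonzero complex polynomial `f` which is not a monomial, Jensen's
inequality comparing the Mahler measure with the `L¹`-norm on the unit circle is strict:
`exp(∫₀¹ log |f(e^{2πik})| dk) < ∫₀¹ |f(e^{2πik})| dk`. -/
theorem mahler_lt_L1_of_not_monomial
    (f : Polynomial ℂ) (hf : f ≠ 0)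
    (hmono : ¬ ∃ (c : ℂ) (n : ℕ), f = Polynomial.C c * Polynomial.X ^ n) :
    Real.exp (∫ k in (0:ℝ)..1, Real.log ‖f.eval (e k)‖) <
      ∫ k in (0:ℝ)..1, ‖f.eval (e k)‖ := by
  rw [integral_comp_e_eq_circleAverage fun z ↦ log ‖f.eval z‖,
    integral_comp_e_eq_circleAverage fun z ↦ ‖f.eval z‖]
  simpa only [mahlerMeasure, if_pos hf, logMahlerMeasure]
    using mahlerMeasure_lt_circleAverage_norm hmono
end
end

section
/- Let ρ be a binary constant-length substitution of length L ≥ 2 which has at least one coincidence position (C_a ∪ C_b ≠ ∅) and at least one bijective position (P_a ∪ P_b ≠ ∅), and for which w_a ≠ a^L and w_b ≠ b^L. Then the unital ℂ-subalgebra of M₂(ℂ) generated by the digit matrices equals the three-dimensional algebra {M ∈ M₂(ℂ) : M₁₁ + M₂₁ = M₁₂ + M₂₂} (the IDA of the period doubling substitution). -/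
noncomputable section

/-- The digit (instruction) matrix at position `x`: `(D_x)_{αβ} = 1` if `(w_β)_x = α`,
and `0` otherwise. -/
def digit {L : ℕ} (wa wb : Fin L → Fin 2) (x : Fin L) : Matrix (Fin 2) (Fin 2) ℂ :=
  Matrix.of fun α β => if (![wa, wb] β) x = α then 1 else 0

/-!
A position `x` of the substitution is a self-map `f` of the alphabet, with `f 0 = wa x` and
`f 1 = wb x`, and its digit matrix sends `e_c` to `e_{f c}`; hence digit matrices multiply like
maps. A coincidence position is a constant map. Since `f ∘ const c = const (f c)` and, by the
assumptions on `wa` and `wb`, each letter is moved by some position, the two constant maps both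
lie in the generated algebra. Together with the identity their matrices span the matrices with
equal column sums, which is a subalgebra because its elements are the matrices having the
all-ones row vector as a left eigenvector.
-/

section LetterMaps

open Matrix

variable {R n : Type*} [DecidableEq n]

/-- The `0`-`1` matrix of a self-map `f` of the alphabet `n`: column `β` has its only `1` in row
`f β`. Digit matrices of constant-length substitutions on `n` are of this form. -/
def letterMapMatrix (R : Type*) [Zero R] [One R] (f : n → n) : Matrix n n R :=
  of fun α β => if f β = α then 1 else 0

theorem letterMapMatrix_apply [Zero R] [One R] (f : n → n) (α β : n) :
    letterMapMatrix R f α β = if f β = α then 1 else 0 :=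
  rfl

theorem letterMapMatrix_mul_letterMapMatrix [Fintype n] [NonAssocSemiring R] (f g : n → n) :
    letterMapMatrix R f * letterMapMatrix R g = letterMapMatrix R (f ∘ g) := by
  ext α β
  simp [mul_apply, letterMapMatrix_apply]

theorem letterMapMatrix_const_apply_mem [Fintype n] [NonAssocSemiring R] {σ : Type*}
    [SetLike σ (Matrix n n R)] [MulMemClass σ (Matrix n n R)] {S : σ}
    {f : n → n} {c : n} (hf : letterMapMatrix R f ∈ S) (hc : letterMapMatrix R (fun _ => c) ∈ S) :
    letterMapMatrix R (fun _ => f c) ∈ S := by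
  have hmul := mul_mem hf hc
  rwa [letterMapMatrix_mul_letterMapMatrix] at hmul

theorem letterMapMatrix_const_mem_of_fin_two [NonAssocSemiring R] {σ : Type*}
    [SetLike σ (Matrix (Fin 2) (Fin 2) R)] [MulMemClass σ (Matrix (Fin 2) (Fin 2) R)] {S : σ}
    (hconst : ∃ c : Fin 2, letterMapMatrix R (fun _ => c) ∈ S)
    (hmove : ∀ c : Fin 2, ∃ f : Fin 2 → Fin 2, letterMapMatrix R f ∈ S ∧ f c ≠ c) (c : Fin 2) :
    letterMapMatrix R (fun _ => c) ∈ S := by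
  obtain ⟨d, hd⟩ := hconst
  by_cases hcd : c = d
  · rwa [hcd]
  · obtain ⟨f, hf, hfd⟩ := hmove d
    have hfc : f d = c := by omega
    exact hfc ▸ letterMapMatrix_const_apply_mem hf hd

end LetterMaps

section EqualColumnSums

open Matrix

variable {R n : Type*} [Fintype n] [DecidableEq n]

/-- The algebra of square matrices all of whose columns have the same sum, encoded by requiring
the all-ones row vector to be a left eigenvector. For `R = ℂ` and `n = Fin 2` it is the inflation
displacement algebra of the period doubling substitution. -/
def equalColSumSubalgebra (R n : Type*) [CommSemiring R] [Fintype n] [DecidableEq n] :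
    Subalgebra R (Matrix n n R) where
  carrier := {M | ∃ c : R, 1 ᵥ* M = c • 1}
  mul_mem' := by
    rintro A B ⟨a, hA⟩ ⟨b, hB⟩
    exact ⟨a * b, by rw [← vecMul_vecMul, hA, smul_vecMul, hB, smul_smul]⟩
  add_mem' := by
    rintro A B ⟨a, hA⟩ ⟨b, hB⟩
    exact ⟨a + b, by rw [vecMul_add, hA, hB, add_smul]⟩
  algebraMap_mem' r := ⟨r, by rw [Algebra.algebraMap_eq_smul_one, vecMul_smul, vecMul_one]⟩

theorem mem_equalColSumSubalgebra_fin_two [CommSemiring R] {M : Matrix (Fin 2) (Fin 2) R} :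
    M ∈ equalColSumSubalgebra R (Fin 2) ↔ M 0 0 + M 1 0 = M 0 1 + M 1 1 := by
  change (∃ c : R, 1 ᵥ* M = c • 1) ↔ _
  simp [funext_iff, Fin.forall_fin_two, vecMul, dotProduct, Fin.sum_univ_two, eq_comm]

theorem letterMapMatrix_mem_equalColSumSubalgebra [CommSemiring R] (f : n → n) :
    letterMapMatrix R f ∈ equalColSumSubalgebra R n :=
  ⟨1, by ext j; simp [letterMapMatrix_apply, vecMul, dotProduct]⟩

theorem eq_smul_one_add_smul_const_of_mem_equalColSumSubalgebra [CommRing R]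
    {M : Matrix (Fin 2) (Fin 2) R} (hM : M ∈ equalColSumSubalgebra R (Fin 2)) :
    M = (M 0 0 - M 0 1) • 1 + M 0 1 • letterMapMatrix R (fun _ => 0)
      + M 1 0 • letterMapMatrix R (fun _ => 1) := by
  rw [mem_equalColSumSubalgebra_fin_two] at hM
  have h11 : M 1 1 = M 0 0 - M 0 1 + M 1 0 := by linear_combination -hM
  ext i j
  fin_cases i <;> fin_cases j <;> simp [letterMapMatrix_apply, h11]

theorem equalColSumSubalgebra_fin_two_le [CommRing R]
    {S : Subalgebra R (Matrix (Fin 2) (Fin 2) R)}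
    (hS : ∀ c : Fin 2, letterMapMatrix R (fun _ => c) ∈ S) :
    equalColSumSubalgebra R (Fin 2) ≤ S := by
  intro M hM
  rw [eq_smul_one_add_smul_const_of_mem_equalColSumSubalgebra hM]
  exact add_mem (add_mem (S.smul_mem S.one_mem _) (S.smul_mem (hS 0) _)) (S.smul_mem (hS 1) _)

end EqualColumnSums

theorem coincidence_binary_substitution_IDA_general {R ι : Type*} [CommRing R]
    (wa wb : ι → Fin 2) (hC : ∃ x, wa x = wb x)
    (hwa : wa ≠ fun _ => 0) (hwb : wb ≠ fun _ => 1) :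
    Algebra.adjoin R (Set.range fun x => letterMapMatrix R ![wa x, wb x]) =
      equalColSumSubalgebra R (Fin 2) := by
  set S := Algebra.adjoin R (Set.range fun x => letterMapMatrix R ![wa x, wb x])
  have hmem (x : ι) : letterMapMatrix R ![wa x, wb x] ∈ S := Algebra.subset_adjoin ⟨x, rfl⟩
  have hconst : ∃ c : Fin 2, letterMapMatrix R (fun _ => c) ∈ S := by
    obtain ⟨x, hx⟩ := hC
    have hx' : ![wa x, wb x] = fun _ => wb x := by simp [funext_iff, Fin.forall_fin_two, hx]
    exact ⟨wb x, hx' ▸ hmem x⟩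
  have hmove (c : Fin 2) : ∃ f : Fin 2 → Fin 2, letterMapMatrix R f ∈ S ∧ f c ≠ c := by
    obtain ⟨x, hx⟩ := Function.ne_iff.1 hwa
    obtain ⟨y, hy⟩ := Function.ne_iff.1 hwb
    fin_cases c
    · exact ⟨_, hmem x, hx⟩
    · exact ⟨_, hmem y, hy⟩
  apply le_antisymm
  · refine Algebra.adjoin_le ?_
    rintro _ ⟨x, rfl⟩
    exact letterMapMatrix_mem_equalColSumSubalgebra _
  · exact equalColSumSubalgebra_fin_two_le (letterMapMatrix_const_mem_of_fin_two hconst hmove)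

theorem digit_eq_letterMapMatrix {L : ℕ} (wa wb : Fin L → Fin 2) (x : Fin L) :
    digit wa wb x = letterMapMatrix ℂ ![wa x, wb x] := by
  ext α β
  fin_cases β <;> rfl

theorem exists_eq_of_coincidence_nonempty {L : ℕ} {wa wb : Fin L → Fin 2}
    (hC : (Ca wa wb ∪ Cb wa wb).Nonempty) : ∃ x, wa x = wb x := by
  obtain ⟨x, hx⟩ := hC
  simp only [Ca, Cb, Finset.mem_union, Finset.mem_filter, Finset.mem_univ, true_and] at hx
  exact ⟨x, by omega⟩

/-- For a binary constant-length substitution of length `L ≥ 2` with at least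
one coincidence position and at least one bijective position, and with `w_a ≠ a^L` and
`w_b ≠ b^L`, the unital ℂ-subalgebra of `M₂(ℂ)` generated by the digit matrices equals the
three-dimensional period-doubling IDA `{M ∈ M₂(ℂ) : M₁₁ + M₂₁ = M₁₂ + M₂₂}`. -/
theorem coincidence_binary_substitution_IDA
    (L : ℕ) (hL : 2 ≤ L) (wa wb : Fin L → Fin 2)
    (hC : (Ca wa wb ∪ Cb wa wb).Nonempty)
    (hP : (Pa wa wb ∪ Pb wa wb).Nonempty)
    (hwa : wa ≠ fun _ => 0) (hwb : wb ≠ fun _ => 1) :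
    (Algebra.adjoin ℂ (Set.range (digit wa wb)) : Set (Matrix (Fin 2) (Fin 2) ℂ)) =
      {M : Matrix (Fin 2) (Fin 2) ℂ | M 0 0 + M 1 0 = M 0 1 + M 1 1} := by
  ext M
  rw [funext (digit_eq_letterMapMatrix wa wb), coincidence_binary_substitution_IDA_general wa wb
    (exists_eq_of_coincidence_nonempty hC) hwa hwb]
  exact mem_equalColSumSubalgebra_fin_two
end
end
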